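/- arXiv:2605.14732 — 2 statements merged into one kernel-verified Lean document; each statement's English description precedes it below -/
import Mathlib

section
/- Let Ω be a nonempty open subset of ℝ², ρ a C¹ moment weight function on Ω satisfying the Pearson equation div(ρΦ) = ρ(ψ₁,ψ₂) on Ω, and u ∈ L²(Ω, ρ). Then for every pair v = (v₁,v₂) of real polynomials in x₁,x₂, ∫_Ω |u div(ρΦv)| dx₁dx₂ ≤ C ‖u‖_{2,ρ}, where C = (∫_Ω K² ρ dx₁dx₂)^{1/2} < ∞ and K = ψ₁v₁ + ψ₂v₂ + φ_{11}∂_{x₁}v₁ + φ_{21}∂_{x₂}v₁ + φ_{12}∂_{x₁}v₂ + φ_{22}∂_{x₂}v₂. -/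
open MeasureTheory Filter

noncomputable section

abbrev Poly2 := MvPolynomial (Fin 2) ℝ

/-- Evaluation of a two-variable real polynomial at a point of `ℝ × ℝ`. -/
def pev (p : Poly2) (x : ℝ × ℝ) : ℝ := MvPolynomial.eval ![x.1, x.2] p

/-- `uᵗ Φ v` where `Φ` is the matrix with polynomial entries `p11 p12 p21 p22`. -/
def bilPhi (p11 p12 p21 p22 : Poly2) (x u v : ℝ × ℝ) : ℝ :=
  u.1 * (pev p11 x * v.1 + pev p12 x * v.2) + u.2 * (pev p21 x * v.1 + pev p22 x * v.2)

/-- The (classical) gradient of a two-variable polynomial. -/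
def polyGrad (p : Poly2) (x : ℝ × ℝ) : ℝ × ℝ :=
  (pev (MvPolynomial.pderiv (0 : Fin 2) p) x, pev (MvPolynomial.pderiv (1 : Fin 2) p) x)

/-- `ρ` is a weight function on `Ω`. -/
def IsWeight (Ω : Set (ℝ × ℝ)) (ρ : ℝ × ℝ → ℝ) : Prop :=
  Measurable ρ ∧ (∀ᵐ x ∂(volume.restrict Ω), 0 < ρ x) ∧ IntegrableOn ρ Ω

/-- `ρ` is a moment weight function on `Ω`. -/
def IsMomentWeight (Ω : Set (ℝ × ℝ)) (ρ : ℝ × ℝ → ℝ) : Prop :=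
  Measurable ρ ∧ (∀ᵐ x ∂(volume.restrict Ω), 0 < ρ x) ∧
    ∀ m n : ℕ, IntegrableOn (fun x : ℝ × ℝ => |x.1| ^ m * |x.2| ^ n * ρ x) Ω

/-- `Φ` is symmetric and positive definite at every point of `Ω`. -/
def SymPosDef (Ω : Set (ℝ × ℝ)) (p11 p12 p21 p22 : Poly2) : Prop :=
  p12 = p21 ∧ ∀ x ∈ Ω, ∀ ζ : ℝ × ℝ, ζ ≠ 0 → 0 < bilPhi p11 p12 p21 p22 x ζ ζ

/-- `Φ` is symmetric, has entries of degree at most 2, and is positive definite on `Ω`. -/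
def GoodPhi (Ω : Set (ℝ × ℝ)) (p11 p12 p21 p22 : Poly2) : Prop :=
  SymPosDef Ω p11 p12 p21 p22 ∧ p11.totalDegree ≤ 2 ∧ p12.totalDegree ≤ 2 ∧
    p21.totalDegree ≤ 2 ∧ p22.totalDegree ≤ 2

/-- The Pearson equation `div(ρΦ) = ρ(ψ₁,ψ₂)` with explicit degree-one polynomials
`ψⱼ(x) = d_{j1} x₁ + d_{j2} x₂ + e_j` having linearly independent linear parts. -/
def PearsonWith (Ω : Set (ℝ × ℝ)) (ρ : ℝ × ℝ → ℝ) (p11 p12 p21 p22 : Poly2)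
    (d11 d12 d21 d22 e1 e2 : ℝ) : Prop :=
  ContDiffOn ℝ 1 ρ Ω ∧ d11 * d22 - d12 * d21 ≠ 0 ∧
    (∀ x ∈ Ω,
      fderiv ℝ (fun y => ρ y * pev p11 y) x (1, 0) +
        fderiv ℝ (fun y => ρ y * pev p21 y) x (0, 1) = ρ x * (d11 * x.1 + d12 * x.2 + e1)) ∧
    (∀ x ∈ Ω,
      fderiv ℝ (fun y => ρ y * pev p12 y) x (1, 0) +
        fderiv ℝ (fun y => ρ y * pev p22 y) x (0, 1) = ρ x * (d21 * x.1 + d22 * x.2 + e2))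

/-- The Pearson equation `div(ρΦ) = ρ(ψ₁,ψ₂)` for some admissible `ψ₁, ψ₂`. -/
def Pearson (Ω : Set (ℝ × ℝ)) (ρ : ℝ × ℝ → ℝ) (p11 p12 p21 p22 : Poly2) : Prop :=
  ∃ d11 d12 d21 d22 e1 e2 : ℝ, PearsonWith Ω ρ p11 p12 p21 p22 d11 d12 d21 d22 e1 e2

/-- `div(ρΦv)` for a pair of polynomials `v = (v1, v2)`. -/
def divRhoPhi (ρ : ℝ × ℝ → ℝ) (p11 p12 p21 p22 v1 v2 : Poly2) (x : ℝ × ℝ) : ℝ :=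
  fderiv ℝ (fun y => ρ y * (pev p11 y * pev v1 y + pev p12 y * pev v2 y)) x (1, 0) +
    fderiv ℝ (fun y => ρ y * (pev p21 y * pev v1 y + pev p22 y * pev v2 y)) x (0, 1)

/-- Membership in `L²(Ω, ρ)`. -/
def MemL2 (Ω : Set (ℝ × ℝ)) (ρ : ℝ × ℝ → ℝ) (u : ℝ × ℝ → ℝ) : Prop :=
  Measurable u ∧ IntegrableOn (fun x => u x ^ 2 * ρ x) Ω

/-- Membership in the matrix-weighted Lebesgue space `L²(Ω, ρΦ)`. -/
def MemL2M (Ω : Set (ℝ × ℝ)) (ρ : ℝ × ℝ → ℝ) (p11 p12 p21 p22 : Poly2)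
    (w : ℝ × ℝ → ℝ × ℝ) : Prop :=
  Measurable w ∧ IntegrableOn (fun x => ρ x * bilPhi p11 p12 p21 p22 x (w x) (w x)) Ω

/-- `h` is a weak gradient of `u`. -/
def IsWeakGrad (Ω : Set (ℝ × ℝ)) (ρ : ℝ × ℝ → ℝ) (p11 p12 p21 p22 : Poly2)
    (u : ℝ × ℝ → ℝ) (h : ℝ × ℝ → ℝ × ℝ) : Prop :=
  MemL2M Ω ρ p11 p12 p21 p22 h ∧
    ∀ v1 v2 : Poly2,
      ∫ x in Ω, u x * divRhoPhi ρ p11 p12 p21 p22 v1 v2 x =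
        - ∫ x in Ω, ρ x * bilPhi p11 p12 p21 p22 x (h x) (pev v1 x, pev v2 x)

/-- Membership in `W(Ω, ρ, ρΦ)`, the closure of the polynomials in `W^{1,2}(Ω, ρ, ρΦ)`,
for a function `u` with weak gradient `g`. -/
def MemW (Ω : Set (ℝ × ℝ)) (ρ : ℝ × ℝ → ℝ) (p11 p12 p21 p22 : Poly2)
    (u : ℝ × ℝ → ℝ) (g : ℝ × ℝ → ℝ × ℝ) : Prop :=
  MemL2 Ω ρ u ∧ IsWeakGrad Ω ρ p11 p12 p21 p22 u g ∧
    ∀ ε : ℝ, 0 < ε → ∃ q : Poly2,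
      (∫ x in Ω, (u x - pev q x) ^ 2 * ρ x) +
        (∫ x in Ω, ρ x * bilPhi p11 p12 p21 p22 x (g x - polyGrad q x) (g x - polyGrad q x))
          < ε ^ 2

/-- The polynomial function
`K = ψ₁v₁ + ψ₂v₂ + φ₁₁∂₁v₁ + φ₂₁∂₂v₁ + φ₁₂∂₁v₂ + φ₂₂∂₂v₂`. -/
def Kfun (p11 p12 p21 p22 v1 v2 : Poly2) (d11 d12 d21 d22 e1 e2 : ℝ) (x : ℝ × ℝ) : ℝ :=
  (d11 * x.1 + d12 * x.2 + e1) * pev v1 x + (d21 * x.1 + d22 * x.2 + e2) * pev v2 x +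
    pev p11 x * pev (MvPolynomial.pderiv (0 : Fin 2) v1) x +
    pev p21 x * pev (MvPolynomial.pderiv (1 : Fin 2) v1) x +
    pev p12 x * pev (MvPolynomial.pderiv (0 : Fin 2) v2) x +
    pev p22 x * pev (MvPolynomial.pderiv (1 : Fin 2) v2) x

/-!
The product rule for the divergence and the Pearson equation give `div(ρΦv) = K ρ` on `Ω`, where `K`
is a polynomial. So `|u div(ρΦv)| = (|u| √ρ) (|K| √ρ)`, and the bound is the Cauchy–Schwarz
inequality; `∫ K² ρ` is finite because `K²` is a polynomial and all moments of `ρ` are finite.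
-/

section Calculus

variable {𝕜 E : Type*} [NontriviallyNormedField 𝕜] [NormedAddCommGroup E] [NormedSpace 𝕜 E]

theorem hasFDerivAt_mvPolynomial_eval {σ : Type*} [Fintype σ] {f : E → σ → 𝕜}
    {f' : σ → E →L[𝕜] 𝕜} {x : E}
    (hf : ∀ i, HasFDerivAt (fun y => f y i) (f' i) x) (p : MvPolynomial σ 𝕜) :
    HasFDerivAt (fun y => MvPolynomial.eval (f y) p)
      (∑ i, MvPolynomial.eval (f x) (MvPolynomial.pderiv i p) • f' i) x := by
  classical
  induction p using MvPolynomial.induction_on with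
  | C a =>
    simp only [MvPolynomial.eval_C]
    exact (hasFDerivAt_const a x).congr_fderiv (by ext; simp)
  | add p q hp hq =>
    simp only [map_add]
    exact (hp.fun_add hq).congr_fderiv (by ext; simp [add_mul, Finset.sum_add_distrib])
  | mul_X p k hp =>
    simp only [map_mul, MvPolynomial.eval_X]
    refine (hp.fun_mul (hf k)).congr_fderiv ?_
    ext
    simp [MvPolynomial.pderiv_X, Pi.single_apply, apply_ite, add_mul, Finset.sum_add_distrib,
      Finset.mul_sum, mul_assoc]

/-- The product rule `div (A v) = (div A) · v + A : ∇v`, the divergence being taken along the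
directions `e i`. -/
theorem sum_fderiv_sum_mul_apply {ι κ : Type*} [Fintype ι] [Fintype κ] {A : ι → κ → E → 𝕜}
    {v : κ → E → 𝕜} {x : E}
    (hA : ∀ i j, DifferentiableAt 𝕜 (A i j) x) (hv : ∀ j, DifferentiableAt 𝕜 (v j) x) (e : ι → E) :
    ∑ i, fderiv 𝕜 (fun y => ∑ j, A i j y * v j y) x (e i) =
      ∑ j, (∑ i, fderiv 𝕜 (A i j) x (e i)) * v j x +
        ∑ i, ∑ j, A i j x * fderiv 𝕜 (v j) x (e i) := by
  have hrow (i : ι) : fderiv 𝕜 (fun y => ∑ j, A i j y * v j y) x (e i) =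
      ∑ j, (fderiv 𝕜 (A i j) x (e i) * v j x + A i j x * fderiv 𝕜 (v j) x (e i)) := by
    rw [fderiv_fun_sum fun j _ => (hA i j).fun_mul (hv j), sum_apply]
    refine Finset.sum_congr rfl fun j _ => ?_
    rw [fderiv_fun_mul (hA i j) (hv j)]
    simp only [add_apply, smul_apply, smul_eq_mul]
    ring
  simp only [hrow, Finset.sum_add_distrib, Finset.sum_mul]
  rw [Finset.sum_comm]

end Calculus

section Integration

variable {α : Type*} [MeasurableSpace α] {μ : Measure α}

theorem integrable_mvPolynomial_eval_mul {σ : Type*} {f : α → σ → ℝ} {ρ : α → ℝ}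
    (hmon : ∀ s : σ →₀ ℕ, Integrable (fun x => (s.prod fun i n => f x i ^ n) * ρ x) μ)
    (p : MvPolynomial σ ℝ) :
    Integrable (fun x => MvPolynomial.eval (f x) p * ρ x) μ := by
  simp only [MvPolynomial.eval_eq, Finset.sum_mul, mul_assoc]
  exact integrable_finsetSum _ fun s _ => (hmon s).const_mul _

theorem lintegral_ofReal_abs_mul_le_sqrt_mul_sqrt {f g : α → ℝ} (hf : MemLp f 2 μ)
    (hg : MemLp g 2 μ) :
    ∫⁻ x, ENNReal.ofReal |f x * g x| ∂μ ≤
      ENNReal.ofReal (√(∫ x, f x ^ 2 ∂μ) * √(∫ x, g x ^ 2 ∂μ)) := by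
  have hint : Integrable (fun x => f x * g x) μ := hf.integrable_mul hg
  rw [← ofReal_integral_eq_lintegral_ofReal hint.abs (.of_forall fun _ => abs_nonneg _)]
  refine ENNReal.ofReal_le_ofReal ?_
  have hHolder := integral_mul_norm_le_Lp_mul_Lq (μ := μ) Real.HolderConjugate.two_two
    (f := f) (g := g) (by simpa using hf) (by simpa using hg)
  simpa [abs_mul, Real.sqrt_eq_rpow] using hHolder

variable {f g ρ : α → ℝ}

theorem mul_sqrt_sq_ae_eq (hρ : 0 ≤ᵐ[μ] ρ) (f : α → ℝ) :
    (fun x => (f x * √(ρ x)) ^ 2) =ᵐ[μ] fun x => f x ^ 2 * ρ x := by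
  filter_upwards [hρ] with x hx
  rw [mul_pow, Real.sq_sqrt hx]

theorem memLp_two_mul_sqrt (hρm : AEMeasurable ρ μ) (hρ : 0 ≤ᵐ[μ] ρ) (hfm : AEMeasurable f μ)
    (hf : Integrable (fun x => f x ^ 2 * ρ x) μ) : MemLp (fun x => f x * √(ρ x)) 2 μ :=
  (memLp_two_iff_integrable_sq (hfm.mul hρm.sqrt).aestronglyMeasurable).2
    (hf.congr (mul_sqrt_sq_ae_eq hρ f).symm)

theorem lintegral_ofReal_abs_mul_mul_weight_le (hρm : AEMeasurable ρ μ) (hρ : 0 ≤ᵐ[μ] ρ)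
    (hfm : AEMeasurable f μ) (hf : Integrable (fun x => f x ^ 2 * ρ x) μ)
    (hgm : AEMeasurable g μ) (hg : Integrable (fun x => g x ^ 2 * ρ x) μ) :
    ∫⁻ x, ENNReal.ofReal |f x * g x * ρ x| ∂μ ≤
      ENNReal.ofReal (√(∫ x, f x ^ 2 * ρ x ∂μ) * √(∫ x, g x ^ 2 * ρ x ∂μ)) := by
  have hsplit : (fun x => ENNReal.ofReal |f x * g x * ρ x|) =ᵐ[μ]
      fun x => ENNReal.ofReal |f x * √(ρ x) * (g x * √(ρ x))| := by
    filter_upwards [hρ] with x hx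
    rw [mul_mul_mul_comm, Real.mul_self_sqrt hx]
  rw [lintegral_congr_ae hsplit, ← integral_congr_ae (mul_sqrt_sq_ae_eq hρ f),
    ← integral_congr_ae (mul_sqrt_sq_ae_eq hρ g)]
  exact lintegral_ofReal_abs_mul_le_sqrt_mul_sqrt (memLp_two_mul_sqrt hρm hρ hfm hf)
    (memLp_two_mul_sqrt hρm hρ hgm hg)

end Integration

section PlanePolynomials

theorem pev_pow (p : Poly2) (n : ℕ) (x : ℝ × ℝ) : pev (p ^ n) x = pev p x ^ n :=
  map_pow _ p n

theorem hasFDerivAt_pev (p : Poly2) (x : ℝ × ℝ) :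
    HasFDerivAt (pev p)
      (pev (MvPolynomial.pderiv 0 p) x • ContinuousLinearMap.fst ℝ ℝ ℝ +
        pev (MvPolynomial.pderiv 1 p) x • ContinuousLinearMap.snd ℝ ℝ ℝ) x := by
  have hcoord : ∀ i, HasFDerivAt (fun y : ℝ × ℝ => ![y.1, y.2] i)
      (![ContinuousLinearMap.fst ℝ ℝ ℝ, ContinuousLinearMap.snd ℝ ℝ ℝ] i) x :=
    Fin.forall_fin_two.2 ⟨hasFDerivAt_fst, hasFDerivAt_snd⟩
  exact (hasFDerivAt_mvPolynomial_eval hcoord p).congr_fderiv (Fin.sum_univ_two _)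

theorem differentiable_pev (p : Poly2) : Differentiable ℝ (pev p) :=
  fun x => (hasFDerivAt_pev p x).differentiableAt

theorem fderiv_pev_fst (p : Poly2) (x : ℝ × ℝ) :
    fderiv ℝ (pev p) x (1, 0) = pev (MvPolynomial.pderiv 0 p) x := by
  simp [(hasFDerivAt_pev p x).fderiv]

theorem fderiv_pev_snd (p : Poly2) (x : ℝ × ℝ) :
    fderiv ℝ (pev p) x (0, 1) = pev (MvPolynomial.pderiv 1 p) x := by
  simp [(hasFDerivAt_pev p x).fderiv]

theorem IsMomentWeight.integrableOn_pev_mul {Ω : Set (ℝ × ℝ)} {ρ : ℝ × ℝ → ℝ}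
    (hρ : IsMomentWeight Ω ρ) (p : Poly2) : IntegrableOn (fun x => pev p x * ρ x) Ω := by
  obtain ⟨hρm, -, hmoments⟩ := hρ
  have hmonomial (s : Fin 2 →₀ ℕ) :
      IntegrableOn (fun x => (s.prod fun i n => ![x.1, x.2] i ^ n) * ρ x) Ω := by
    have hprod (x : ℝ × ℝ) : (s.prod fun i n => ![x.1, x.2] i ^ n) = x.1 ^ s 0 * x.2 ^ s 1 :=
      (s.prod_fintype _ fun _ => pow_zero _).trans (Fin.prod_univ_two _)
    simp only [hprod]
    refine (hmoments (s 0) (s 1)).congr' ?_ (.of_forall fun x => ?_)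
    · exact Measurable.aestronglyMeasurable (by fun_prop)
    · simp
  exact integrable_mvPolynomial_eval_mul hmonomial p

end PlanePolynomials

/-- The Pearson equation `div(ρΦ) = ρ(ψ₁,ψ₂)` on `Ω` for a differentiable `ρ`, an arbitrary
polynomial matrix `Φ` and polynomials `ψ₁, ψ₂` of any degree. -/
structure PolyPearson (Ω : Set (ℝ × ℝ)) (ρ : ℝ × ℝ → ℝ) (p11 p12 p21 p22 ψ1 ψ2 : Poly2) :
    Prop where
  differentiableOn : DifferentiableOn ℝ ρ Ω
  div_col_one : ∀ x ∈ Ω, fderiv ℝ (fun y => ρ y * pev p11 y) x (1, 0) +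
    fderiv ℝ (fun y => ρ y * pev p21 y) x (0, 1) = ρ x * pev ψ1 x
  div_col_two : ∀ x ∈ Ω, fderiv ℝ (fun y => ρ y * pev p12 y) x (1, 0) +
    fderiv ℝ (fun y => ρ y * pev p22 y) x (0, 1) = ρ x * pev ψ2 x

/-- The polynomial `K` for which the Pearson equation `div(ρΦ) = ρ(ψ₁,ψ₂)` gives
`div(ρΦv) = K ρ`. -/
def divPoly (p11 p12 p21 p22 ψ1 ψ2 v1 v2 : Poly2) : Poly2 :=
  ψ1 * v1 + ψ2 * v2 +
    p11 * MvPolynomial.pderiv 0 v1 + p21 * MvPolynomial.pderiv 1 v1 +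
    p12 * MvPolynomial.pderiv 0 v2 + p22 * MvPolynomial.pderiv 1 v2

/-- The polynomial `a x₁ + b x₂ + c`, the form of the `ψⱼ` in `PearsonWith`. -/
def affinePoly (a b c : ℝ) : Poly2 :=
  MvPolynomial.C a * MvPolynomial.X 0 + MvPolynomial.C b * MvPolynomial.X 1 + MvPolynomial.C c

theorem pev_affinePoly (a b c : ℝ) (x : ℝ × ℝ) :
    pev (affinePoly a b c) x = a * x.1 + b * x.2 + c := by
  simp [pev, affinePoly]

theorem Kfun_eq_pev_divPoly (p11 p12 p21 p22 v1 v2 : Poly2) (d11 d12 d21 d22 e1 e2 : ℝ)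
    (x : ℝ × ℝ) :
    Kfun p11 p12 p21 p22 v1 v2 d11 d12 d21 d22 e1 e2 x =
      pev (divPoly p11 p12 p21 p22 (affinePoly d11 d12 e1) (affinePoly d21 d22 e2) v1 v2) x := by
  simp [Kfun, pev, divPoly, affinePoly]

section Pearson

variable {Ω : Set (ℝ × ℝ)} {ρ : ℝ × ℝ → ℝ} {p11 p12 p21 p22 : Poly2}

theorem PearsonWith.polyPearson {d11 d12 d21 d22 e1 e2 : ℝ}
    (hP : PearsonWith Ω ρ p11 p12 p21 p22 d11 d12 d21 d22 e1 e2) :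
    PolyPearson Ω ρ p11 p12 p21 p22 (affinePoly d11 d12 e1) (affinePoly d21 d22 e2) := by
  obtain ⟨hρ, -, hcol1, hcol2⟩ := hP
  exact ⟨hρ.differentiableOn one_ne_zero, by simpa only [pev_affinePoly] using hcol1,
    by simpa only [pev_affinePoly] using hcol2⟩

theorem PolyPearson.divRhoPhi_eq {ψ1 ψ2 : Poly2} (hΩ : IsOpen Ω)
    (hP : PolyPearson Ω ρ p11 p12 p21 p22 ψ1 ψ2) (v1 v2 : Poly2) {x : ℝ × ℝ} (hx : x ∈ Ω) :
    divRhoPhi ρ p11 p12 p21 p22 v1 v2 x = pev (divPoly p11 p12 p21 p22 ψ1 ψ2 v1 v2) x * ρ x := by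
  have hρ : DifferentiableAt ℝ ρ x := hP.differentiableOn.differentiableAt (hΩ.mem_nhds hx)
  have hleibniz := sum_fderiv_sum_mul_apply (x := x)
    (A := fun i j y => ρ y * pev (!![p11, p12; p21, p22] i j) y) (v := fun j => pev (![v1, v2] j))
    (fun i j => hρ.mul (differentiable_pev _ x)) (fun j => differentiable_pev _ x)
    ![(1, 0), (0, 1)]
  simp only [Fin.sum_univ_two, Matrix.of_apply, Matrix.cons_val_zero, Matrix.cons_val_one,
    mul_assoc, ← mul_add, fderiv_pev_fst, fderiv_pev_snd, hP.div_col_one x hx,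
    hP.div_col_two x hx] at hleibniz
  rw [divRhoPhi, hleibniz]
  simp only [divPoly, pev, map_add, map_mul]
  ring

theorem integral_u_divRhoPhi_bound_general {ψ1 ψ2 : Poly2} {u : ℝ × ℝ → ℝ} (hΩ : IsOpen Ω)
    (hρ : IsMomentWeight Ω ρ) (hP : PolyPearson Ω ρ p11 p12 p21 p22 ψ1 ψ2) (hu : MemL2 Ω ρ u)
    (v1 v2 : Poly2) :
    IntegrableOn (fun x => pev (divPoly p11 p12 p21 p22 ψ1 ψ2 v1 v2) x ^ 2 * ρ x) Ω ∧
    ∫⁻ x in Ω, ENNReal.ofReal |u x * divRhoPhi ρ p11 p12 p21 p22 v1 v2 x| ≤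
      ENNReal.ofReal (√(∫ x in Ω, pev (divPoly p11 p12 p21 p22 ψ1 ψ2 v1 v2) x ^ 2 * ρ x) *
        √(∫ x in Ω, u x ^ 2 * ρ x)) := by
  set K := divPoly p11 p12 p21 p22 ψ1 ψ2 v1 v2
  have hKint : IntegrableOn (fun x => pev K x ^ 2 * ρ x) Ω := by
    simp only [← pev_pow]
    exact hρ.integrableOn_pev_mul (K ^ 2)
  have hdiv : ∀ x ∈ Ω, u x * divRhoPhi ρ p11 p12 p21 p22 v1 v2 x = pev K x * u x * ρ x := by
    intro x hx
    rw [hP.divRhoPhi_eq hΩ v1 v2 hx]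
    ring
  refine ⟨hKint, ?_⟩
  rw [setLIntegral_congr_fun hΩ.measurableSet fun x hx =>
    congrArg (fun t => ENNReal.ofReal |t|) (hdiv x hx)]
  exact lintegral_ofReal_abs_mul_mul_weight_le hρ.1.aemeasurable
    (hρ.2.1.mono fun _ => le_of_lt) (differentiable_pev K).continuous.aemeasurable hKint
    hu.1.aemeasurable hu.2

end Pearson

/-- For `u ∈ L²(Ω,ρ)` and a polynomial pair `v`,
`∫_Ω |u div(ρΦv)| ≤ C ‖u‖_{2,ρ}` where `C = (∫_Ω K² ρ)^{1/2} < ∞`. -/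
theorem integral_u_divRhoPhi_bound (Ω : Set (ℝ × ℝ)) (hΩopen : IsOpen Ω) (hΩne : Ω.Nonempty)
    (ρ : ℝ × ℝ → ℝ) (hρ : IsMomentWeight Ω ρ)
    (p11 p12 p21 p22 : Poly2) (hΦ : GoodPhi Ω p11 p12 p21 p22)
    (d11 d12 d21 d22 e1 e2 : ℝ)
    (hP : PearsonWith Ω ρ p11 p12 p21 p22 d11 d12 d21 d22 e1 e2)
    (u : ℝ × ℝ → ℝ) (hu : MemL2 Ω ρ u) (v1 v2 : Poly2) :
    IntegrableOn
      (fun x => Kfun p11 p12 p21 p22 v1 v2 d11 d12 d21 d22 e1 e2 x ^ 2 * ρ x) Ω ∧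
    (∫⁻ x in Ω, ENNReal.ofReal (|u x * divRhoPhi ρ p11 p12 p21 p22 v1 v2 x|)) ≤
      ENNReal.ofReal
        (Real.sqrt (∫ x in Ω, Kfun p11 p12 p21 p22 v1 v2 d11 d12 d21 d22 e1 e2 x ^ 2 * ρ x) *
          Real.sqrt (∫ x in Ω, u x ^ 2 * ρ x)) := by
  simpa only [Kfun_eq_pev_divPoly] using
    integral_u_divRhoPhi_bound_general hΩopen hρ hP.polyPearson hu v1 v2
end
end

section
/- Let T = {(x₁,x₂) ∈ ℝ² : x₁ > 0, x₂ > 0, x₁ + x₂ < 1}, let α, β, γ > −1, ρ(x₁,x₂) = x₁^α x₂^β (1−x₁−x₂)^γ, and Φ(x₁,x₂) = [[x₁(1−x₁), −x₁x₂], [−x₁x₂, x₂(1−x₂)]]. If u is a smooth (C¹) function on a neighborhood of the closed triangle T̄ with u ∈ L²(T,ρ) and ∇u ∈ L²(T,ρΦ), then for every pair v = (v₁,v₂) of real polynomials in x₁,x₂ one has ∫_T u div(ρΦv) dx₁dx₂ = −∫_T (∇u)ᵗ ρΦ v dx₁dx₂. -/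
open MeasureTheory Filter

noncomputable section

/-- The open triangle with vertices `(0,0)`, `(1,0)`, `(0,1)`. -/
def Ttri : Set (ℝ × ℝ) := {x : ℝ × ℝ | 0 < x.1 ∧ 0 < x.2 ∧ x.1 + x.2 < 1}

/-- The Jacobi-type weight `ρ(x) = x₁^α x₂^β (1−x₁−x₂)^γ`. -/
def rhoT (α β γ : ℝ) (x : ℝ × ℝ) : ℝ :=
  x.1 ^ α * x.2 ^ β * (1 - x.1 - x.2) ^ γ

/-- The entry `φ₁₁ = x₁(1−x₁)` of the triangle matrix `Φ`. -/
def q11 : Poly2 := MvPolynomial.X 0 * (1 - MvPolynomial.X 0)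

/-- The entry `φ₁₂ = φ₂₁ = −x₁x₂` of the triangle matrix `Φ`. -/
def q12 : Poly2 := -(MvPolynomial.X 0 * MvPolynomial.X 1)

/-- The entry `φ₂₂ = x₂(1−x₂)` of the triangle matrix `Φ`. -/
def q22 : Poly2 := MvPolynomial.X 1 * (1 - MvPolynomial.X 1)

/-- The classical gradient of a function of two variables. -/
def gradF (u : ℝ × ℝ → ℝ) (x : ℝ × ℝ) : ℝ × ℝ :=
  (fderiv ℝ u x (1, 0), fderiv ℝ u x (0, 1))

/-!
With `z = 1 - x₁ - x₂`, the matrix `Φ` is a sum of three rank-one matrices, one for each edge: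
`Φ = x₁z e₁e₁ᵗ + x₂z e₂e₂ᵗ + x₁x₂ (e₁ - e₂)(e₁ - e₂)ᵗ`. Hence `div(u ρΦv)` is a sum of three
directional derivatives, each along an edge direction `e`, of a function that vanishes on the other
two edges because there the exponents of its weight are raised by one and so become positive.
Integrating along the lines parallel to `e` first, the fundamental theorem of calculus shows that
each of them has integral zero. The symmetries of the triangle reduce this to one direction.
-/

open Set

section Calculus

variable {E G : Type*} [NormedAddCommGroup E] [NormedSpace ℝ E] [NormedAddCommGroup G]
  [NormedSpace ℝ G]

lemma hasDerivAt_comp_prodMk_of_differentiableAt {F : E × ℝ → G} {x : E × ℝ}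
    (hF : DifferentiableAt ℝ F x) :
    HasDerivAt (fun t => F (x.1, t)) (fderiv ℝ F x (0, 1)) x.2 :=
  HasFDerivAt.comp_hasDerivAt x.2 hF.hasFDerivAt
    ((hasDerivAt_const x.2 x.1).prodMk (hasDerivAt_id x.2))

lemma contDiffAt_comp_closure_of_mapsTo {n : WithTop ℕ∞} {s : Set E} {A : E → E} {w : E → G}
    (hA : ContDiff ℝ n A) (hmaps : MapsTo A s s) (hw : ∀ x ∈ closure s, ContDiffAt ℝ n w x) :
    ∀ x ∈ closure s, ContDiffAt ℝ n (w ∘ A) x := fun x hx =>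
  (hw _ (hmaps.closure hA.continuous hx)).comp x hA.contDiffAt

lemma continuousOn_of_forall_contDiffAt {s : Set E} {w : E → G}
    (hw : ∀ x ∈ s, ContDiffAt ℝ 1 w x) : ContinuousOn w s := fun x hx =>
  (hw x hx).continuousAt.continuousWithinAt

lemma continuousOn_fderiv_apply {s : Set E} {w : E → G} (hw : ∀ x ∈ s, ContDiffAt ℝ 1 w x)
    (e : E) : ContinuousOn (fun x => fderiv ℝ w x e) s := fun x hx =>
  (((hw x hx).continuousAt_fderiv one_ne_zero).clm_apply continuousAt_const).continuousWithinAt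

lemma mul_fderiv_add_fderiv {u P Q : E → ℝ} {x : E} (hu : DifferentiableAt ℝ u x)
    (hP : DifferentiableAt ℝ P x) (hQ : DifferentiableAt ℝ Q x) (d e : E) :
    u x * (fderiv ℝ P x d + fderiv ℝ Q x e) =
      fderiv ℝ (u * P) x d + fderiv ℝ (u * Q) x e -
        (fderiv ℝ u x d * P x + fderiv ℝ u x e * Q x) := by
  simp only [fderiv_mul hu hP, fderiv_mul hu hQ, add_apply, smul_apply, smul_eq_mul]
  ring

lemma fderiv_add_apply_add_fderiv_sub_apply {A B C : E → G} {x : E}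
    (hA : DifferentiableAt ℝ A x) (hB : DifferentiableAt ℝ B x) (hC : DifferentiableAt ℝ C x)
    (d e : E) :
    fderiv ℝ (A + C) x d + fderiv ℝ (B - C) x e =
      fderiv ℝ A x d + fderiv ℝ B x e + fderiv ℝ C x (d - e) := by
  simp only [fderiv_add hA hC, fderiv_sub hB hC, map_sub, add_apply, sub_apply]
  abel

end Calculus

section RegionBetween

variable {X E : Type*} [NormedAddCommGroup E] {l r : X → ℝ} {s : Set X}

lemma indicator_regionBetween_apply (f : X × ℝ → E) {x : X} (hx : x ∈ s) (y : ℝ) :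
    (regionBetween l r s).indicator f (x, y) =
      (Ioo (l x) (r x)).indicator (fun y => f (x, y)) y := by
  simp only [indicator, regionBetween, mem_ofPred_eq, hx, true_and]

variable [MeasurableSpace X] {μ : Measure X} [SFinite μ]

lemma ae_integrableOn_Ioo_of_regionBetween (hl : Measurable l) (hr : Measurable r)
    (hs : MeasurableSet s) {f : X × ℝ → E}
    (hf : IntegrableOn f (regionBetween l r s) (μ.prod volume)) :
    ∀ᵐ x ∂μ, x ∈ s → IntegrableOn (fun y => f (x, y)) (Ioo (l x) (r x)) := by
  have hind := hf.integrable_indicator (measurableSet_regionBetween hl hr hs)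
  filter_upwards [hind.prod_right_ae] with x hint hx
  simpa only [indicator_regionBetween_apply f hx, integrable_indicator_iff measurableSet_Ioo]
    using hint

variable [NormedSpace ℝ E]

theorem setIntegral_regionBetween (hl : Measurable l) (hr : Measurable r) (hs : MeasurableSet s)
    {f : X × ℝ → E} (hf : IntegrableOn f (regionBetween l r s) (μ.prod volume)) :
    ∫ p in regionBetween l r s, f p ∂(μ.prod volume) =
      ∫ x in s, ∫ y in Ioo (l x) (r x), f (x, y) ∂volume ∂μ := by
  have hmeas := measurableSet_regionBetween hl hr hs
  rw [← integral_indicator hmeas, integral_prod _ (hf.integrable_indicator hmeas),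
    ← integral_indicator hs]
  congr 1 with x
  by_cases hx : x ∈ s
  · simp only [indicator_regionBetween_apply f hx, integral_indicator measurableSet_Ioo,
      indicator_of_mem hx]
  · have hnotMem (y : ℝ) : (x, y) ∉ regionBetween l r s := fun h => hx h.1
    simp only [indicator_of_notMem (hnotMem _), indicator_of_notMem hx, integral_zero]

theorem setIntegral_regionBetween_of_hasDerivAt [CompleteSpace E] (hl : Measurable l)
    (hr : Measurable r) (hs : MeasurableSet s) (hlr : ∀ x ∈ s, l x ≤ r x) {F F' : X × ℝ → E}
    (hcont : ∀ x ∈ s, ContinuousOn (fun y => F (x, y)) (Icc (l x) (r x)))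
    (hderiv : ∀ p ∈ regionBetween l r s, HasDerivAt (fun y => F (p.1, y)) (F' p) p.2)
    (hint : IntegrableOn F' (regionBetween l r s) (μ.prod volume)) :
    ∫ p in regionBetween l r s, F' p ∂(μ.prod volume) =
      ∫ x in s, (F (x, r x) - F (x, l x)) ∂μ := by
  rw [setIntegral_regionBetween hl hr hs hint]
  refine setIntegral_congr_ae hs ?_
  filter_upwards [ae_integrableOn_Ioo_of_regionBetween hl hr hs hint] with x hslice hx
  rw [← integral_Ioc_eq_integral_Ioo, ← intervalIntegral.integral_of_le (hlr x hx)]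
  exact intervalIntegral.integral_eq_sub_of_hasDerivAt_of_le (hlr x hx) (hcont x hx)
    (fun y hy => hderiv (x, y) ⟨hx, hy⟩)
    ((intervalIntegrable_iff_integrableOn_Ioo_of_le (hlr x hx)).2 (hslice hx))

end RegionBetween

section ZeroFlux

variable {E : Type*} [NormedAddCommGroup E] [NormedSpace ℝ E] [MeasureSpace E]

/-- The vector field `x ↦ F x • e` has zero total flux through the boundary of `s`, expressed by its
divergence `∂ₑF`. Integrability is part of the notion, since otherwise the integral would vanish by
convention. -/
def HasZeroFlux (s : Set E) (F : E → ℝ) (e : E) : Prop :=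
  IntegrableOn (fun x => fderiv ℝ F x e) s ∧ ∫ x in s, fderiv ℝ F x e = 0

lemma HasZeroFlux.of_comp {s : Set E} {F : E → ℝ} {e e' : E} {A : E → E} {A' : E →L[ℝ] E}
    (h : HasZeroFlux s (F ∘ A) e) (hs : MeasurableSet s) (hpres : MeasurePreserving A)
    (hemb : MeasurableEmbedding A) (hpre : A ⁻¹' s = s) (hA : ∀ x ∈ s, HasFDerivAt A A' x)
    (he : A' e = e') (hF : ∀ x ∈ s, DifferentiableAt ℝ F x) :
    HasZeroFlux s F e' := by
  subst he
  have hchain : EqOn (fun x => fderiv ℝ (F ∘ A) x e) ((fun x => fderiv ℝ F x (A' e)) ∘ A) s := by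
    intro x hx
    have hAx : A x ∈ s := by rwa [← hpre] at hx
    simp [((hF _ hAx).hasFDerivAt.comp x (hA x hx)).fderiv]
  have hres : MeasurePreserving A (volume.restrict s) (volume.restrict s) := by
    simpa only [hpre] using hpres.restrict_preimage_emb hemb s
  obtain ⟨hint, hzero⟩ := h
  rw [integrableOn_congr_fun hchain hs] at hint
  rw [setIntegral_congr_fun hs hchain] at hzero
  exact ⟨(hres.integrable_comp_emb hemb).1 hint, (hres.integral_comp hemb _).symm.trans hzero⟩

end ZeroFlux

section Triangle

lemma Ttri_eq_regionBetween : Ttri = regionBetween (fun _ => 0) (fun s => 1 - s) (Ioo 0 1) := by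
  ext ⟨s, t⟩
  simp only [Ttri, regionBetween, mem_ofPred_eq, mem_Ioo]
  constructor
  · rintro ⟨hs, ht, hst⟩
    exact ⟨⟨hs, by linarith⟩, ht, by linarith⟩
  · rintro ⟨⟨hs, -⟩, ht, hst⟩
    exact ⟨hs, ht, by linarith⟩

lemma isOpen_Ttri : IsOpen Ttri :=
  (isOpen_lt continuous_const continuous_fst).inter
    ((isOpen_lt continuous_const continuous_snd).inter
      (isOpen_lt (continuous_fst.add continuous_snd) continuous_const))

lemma measurableSet_Ttri : MeasurableSet Ttri := isOpen_Ttri.measurableSet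

lemma Ttri_subset_unit_square : Ttri ⊆ Ioo 0 1 ×ˢ Ioo 0 1 :=
  fun _ ⟨h₁, h₂, h₁₂⟩ => ⟨⟨h₁, by linarith⟩, h₂, by linarith⟩

lemma isCompact_closure_Ttri : IsCompact (closure Ttri) :=
  (((Metric.isBounded_Ioo 0 1).prod (Metric.isBounded_Ioo 0 1)).subset
    Ttri_subset_unit_square).isCompact_closure

lemma mk_mem_closure_Ttri {s t : ℝ} (hs : s ∈ Ioo 0 1) (ht : t ∈ Icc 0 (1 - s)) :
    (s, t) ∈ closure Ttri := by
  have hmaps : MapsTo (fun t => (s, t)) (Ioo 0 (1 - s)) Ttri := fun t ht =>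
    ⟨hs.1, ht.1, by linarith [ht.2]⟩
  rw [← closure_Ioo (by linarith [hs.2])] at ht
  exact hmaps.closure (by fun_prop) ht

theorem hasZeroFlux_Ttri_snd {F : ℝ × ℝ → ℝ} (hdiff : ∀ x ∈ Ttri, DifferentiableAt ℝ F x)
    (hcont : ∀ s ∈ Ioo (0 : ℝ) 1, ContinuousOn (fun t => F (s, t)) (Icc 0 (1 - s)))
    (hbottom : ∀ s ∈ Ioo (0 : ℝ) 1, F (s, 0) = 0)
    (hhypotenuse : ∀ s ∈ Ioo (0 : ℝ) 1, F (s, 1 - s) = 0)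
    (hint : IntegrableOn (fun x => fderiv ℝ F x (0, 1)) Ttri) :
    HasZeroFlux Ttri F (0, 1) := by
  refine ⟨hint, ?_⟩
  have hderiv : ∀ x ∈ Ttri, HasDerivAt (fun t => F (x.1, t)) (fderiv ℝ F x (0, 1)) x.2 :=
    fun x hx => hasDerivAt_comp_prodMk_of_differentiableAt (hdiff x hx)
  rw [Ttri_eq_regionBetween, Measure.volume_eq_prod] at *
  rw [setIntegral_regionBetween_of_hasDerivAt measurable_const (by fun_prop) measurableSet_Ioo
    (fun s hs => by linarith [hs.2]) hcont hderiv hint]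
  exact setIntegral_eq_zero_of_forall_eq_zero fun s hs => by
    rw [hbottom s hs, hhypotenuse s hs, sub_zero]

/-- The affine symmetry of the triangle that exchanges the barycentric coordinates `x₂` and
`1 - x₁ - x₂`. Together with `Prod.swap` it generates all symmetries of the triangle. -/
def triangleReflection (x : ℝ × ℝ) : ℝ × ℝ := (x.1, 1 - x.1 - x.2)

lemma measurePreserving_triangleReflection : MeasurePreserving triangleReflection :=
  (MeasurePreserving.id volume).skew_product (g := fun s t => 1 - s - t) (by fun_prop)
    (ae_of_all _ fun s => (Measure.measurePreserving_sub_left volume (1 - s)).map_eq)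

lemma contDiff_triangleReflection {n : WithTop ℕ∞} : ContDiff ℝ n triangleReflection := by
  unfold triangleReflection
  fun_prop

lemma measurableEmbedding_triangleReflection : MeasurableEmbedding triangleReflection :=
  (MeasurableEquiv.ofInvolutive triangleReflection (fun x => by simp [triangleReflection])
    measurePreserving_triangleReflection.measurable).measurableEmbedding

lemma preimage_triangleReflection_Ttri : triangleReflection ⁻¹' Ttri = Ttri := by
  ext x
  simp only [triangleReflection, Ttri, mem_preimage, mem_ofPred_eq]
  constructor <;> rintro ⟨h₁, h₂, h₁₂⟩ <;> refine ⟨?_, ?_, ?_⟩ <;> linarith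

lemma hasFDerivAt_triangleReflection (x : ℝ × ℝ) :
    HasFDerivAt triangleReflection ((ContinuousLinearMap.fst ℝ ℝ ℝ).prod
      (-ContinuousLinearMap.fst ℝ ℝ ℝ - ContinuousLinearMap.snd ℝ ℝ ℝ)) x :=
  hasFDerivAt_fst.prodMk ((hasFDerivAt_fst.const_sub 1).sub hasFDerivAt_snd)

lemma measurableEmbedding_swap : MeasurableEmbedding (Prod.swap : ℝ × ℝ → ℝ × ℝ) :=
  MeasurableEquiv.prodComm.measurableEmbedding

lemma preimage_swap_Ttri : Prod.swap ⁻¹' Ttri = Ttri := by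
  ext x
  simp only [Ttri, mem_preimage, mem_ofPred_eq, Prod.fst_swap, Prod.snd_swap, add_comm x.2]
  tauto

end Triangle

section JacobiWeight

lemma rhoT_add_one_fst {a b c : ℝ} {x : ℝ × ℝ} (hx : x ∈ Ttri) :
    rhoT (a + 1) b c x = x.1 * rhoT a b c x := by
  simp only [rhoT, Real.rpow_add_one hx.1.ne']
  ring

lemma rhoT_add_one_snd {a b c : ℝ} {x : ℝ × ℝ} (hx : x ∈ Ttri) :
    rhoT a (b + 1) c x = x.2 * rhoT a b c x := by
  simp only [rhoT, Real.rpow_add_one hx.2.1.ne']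
  ring

lemma rhoT_add_one_third {a b c : ℝ} {x : ℝ × ℝ} (hx : x ∈ Ttri) :
    rhoT a b (c + 1) x = (1 - x.1 - x.2) * rhoT a b c x := by
  have hpos : 0 < 1 - x.1 - x.2 := by linarith [hx.2.2]
  simp only [rhoT, Real.rpow_add_one hpos.ne']
  ring

lemma rpow_le_three {t a : ℝ} (ht : 1 / 3 ≤ t) (ht' : t ≤ 1) (ha : -1 ≤ a) : t ^ a ≤ 3 := by
  have hpos : 0 < t := by linarith
  calc t ^ a ≤ t ^ (-1 : ℝ) := Real.rpow_le_rpow_of_exponent_ge hpos ht' ha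
    _ = t⁻¹ := Real.rpow_neg_one t
    _ ≤ 3 := (inv_le_comm₀ hpos three_pos).2 (by linarith)

lemma rpow_mul_rpow_mul_rpow_le {p q r a b c : ℝ} (hp : 0 < p) (hq : 0 < q) (hr : 0 < r)
    (hsum : p + q + r = 1) (ha : -1 ≤ a) (hb : -1 ≤ b) (hc : -1 ≤ c) :
    p ^ a * q ^ b * r ^ c ≤ 3 * (p ^ a * q ^ b + p ^ a * r ^ c + q ^ b * r ^ c) := by
  have hpq : 0 < p ^ a * q ^ b := by positivity
  have hpr : 0 < p ^ a * r ^ c := by positivity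
  have hqr : 0 < q ^ b * r ^ c := by positivity
  rcases le_or_gt (1 / 3) p with h | hp'
  · nlinarith [mul_le_mul_of_nonneg_left (rpow_le_three h (by linarith) ha) hqr.le]
  rcases le_or_gt (1 / 3) q with h | hq'
  · nlinarith [mul_le_mul_of_nonneg_left (rpow_le_three h (by linarith) hb) hpr.le]
  · have h : 1 / 3 ≤ r := by linarith
    nlinarith [mul_le_mul_of_nonneg_left (rpow_le_three h (by linarith) hc) hpq.le]

lemma integrableOn_rpow_mul_rpow_Ttri {a b : ℝ} (ha : -1 < a) (hb : -1 < b) :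
    IntegrableOn (fun x : ℝ × ℝ => x.1 ^ a * x.2 ^ b) Ttri := by
  have hsquare := Integrable.mul_prod
    ((intervalIntegral.integrableOn_Ioo_rpow_iff one_pos).2 ha)
    ((intervalIntegral.integrableOn_Ioo_rpow_iff one_pos).2 hb)
  rw [Measure.prod_restrict] at hsquare
  exact IntegrableOn.mono_set hsquare Ttri_subset_unit_square

theorem integrableOn_rhoT {a b c : ℝ} (ha : -1 < a) (hb : -1 < b) (hc : -1 < c) :
    IntegrableOn (rhoT a b c) Ttri := by
  have hreflect {f : ℝ × ℝ → ℝ} (hf : IntegrableOn f Ttri) :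
      IntegrableOn (f ∘ triangleReflection) Ttri := by
    rw [← preimage_triangleReflection_Ttri]
    exact (measurePreserving_triangleReflection.integrableOn_comp_preimage
      measurableEmbedding_triangleReflection).2 hf
  have hswap {f : ℝ × ℝ → ℝ} (hf : IntegrableOn f Ttri) : IntegrableOn (f ∘ Prod.swap) Ttri := by
    rw [← preimage_swap_Ttri]
    exact (Measure.measurePreserving_swap.integrableOn_comp_preimage
      measurableEmbedding_swap).2 hf
  have hbound := (((integrableOn_rpow_mul_rpow_Ttri ha hb).add
    (hreflect (integrableOn_rpow_mul_rpow_Ttri ha hc))).add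
    (hswap (hreflect (integrableOn_rpow_mul_rpow_Ttri hb hc)))).const_mul 3
  refine hbound.mono' (Measurable.aestronglyMeasurable (by unfold rhoT; fun_prop)) ?_
  refine ae_restrict_of_forall_mem measurableSet_Ttri fun x ⟨h₁, h₂, h₁₂⟩ => ?_
  have h₃ : 0 < 1 - x.1 - x.2 := by linarith
  have hnonneg : 0 ≤ rhoT a b c x := by unfold rhoT; positivity
  rw [Real.norm_of_nonneg hnonneg]
  simpa [rhoT, triangleReflection, sub_right_comm 1 x.2] using
    rpow_mul_rpow_mul_rpow_le h₁ h₂ h₃ (by ring) ha.le hb.le hc.le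

lemma integrableOn_rhoT_mul {a b c : ℝ} (ha : -1 < a) (hb : -1 < b) (hc : -1 < c)
    {g : ℝ × ℝ → ℝ} (hg : ContinuousOn g (closure Ttri)) :
    IntegrableOn (fun x => rhoT a b c x * g x) Ttri :=
  (integrableOn_rhoT ha hb hc).mul_continuousOn_of_subset hg measurableSet_Ttri
    isCompact_closure_Ttri subset_closure

lemma differentiableAt_rhoT (a b c : ℝ) {x : ℝ × ℝ} (hx : x ∈ Ttri) :
    DifferentiableAt ℝ (rhoT a b c) x := by
  obtain ⟨h₁, h₂, h₁₂⟩ := hx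
  have h₃ : 1 - x.1 - x.2 ≠ 0 := by linarith
  exact ((differentiableAt_fst.rpow_const (Or.inl h₁.ne')).mul
    (differentiableAt_snd.rpow_const (Or.inl h₂.ne'))).mul
    (DifferentiableAt.rpow_const (by fun_prop) (Or.inl h₃))

lemma fderiv_rhoT_apply_snd (a b c : ℝ) {x : ℝ × ℝ} (hx : x ∈ Ttri) :
    fderiv ℝ (rhoT a (b + 1) (c + 1)) x (0, 1) =
      rhoT a b c x * ((b + 1) * (1 - x.1 - x.2) - (c + 1) * x.2) := by
  have hline := hasDerivAt_comp_prodMk_of_differentiableAt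
    (differentiableAt_rhoT a (b + 1) (c + 1) hx)
  obtain ⟨-, h₂, h₁₂⟩ := hx
  have h₃ : 1 - x.1 - x.2 ≠ 0 := by linarith
  have hsnd : HasDerivAt (fun t : ℝ => t ^ (b + 1)) _ x.2 :=
    Real.hasDerivAt_rpow_const (Or.inl h₂.ne')
  have hthird : HasDerivAt (fun t : ℝ => (1 - x.1 - t) ^ (c + 1)) _ x.2 :=
    ((hasDerivAt_id x.2).const_sub (1 - x.1)).rpow_const (Or.inl h₃)
  rw [hline.unique ((hsnd.const_mul (x.1 ^ a)).mul hthird)]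
  simp only [rhoT, id, add_sub_cancel_right, Real.rpow_add_one h₂.ne', Real.rpow_add_one h₃]
  ring

variable {a b c : ℝ} {w : ℝ × ℝ → ℝ}

lemma differentiableAt_rhoT_mul (a b c : ℝ) (hw : ∀ x ∈ closure Ttri, ContDiffAt ℝ 1 w x) :
    ∀ x ∈ Ttri, DifferentiableAt ℝ (rhoT a b c * w) x := fun x hx =>
  (differentiableAt_rhoT a b c hx).mul ((hw x (subset_closure hx)).differentiableAt one_ne_zero)

lemma fderiv_rhoT_mul_apply_snd (a b c : ℝ) {x : ℝ × ℝ} (hx : x ∈ Ttri)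
    (hw : DifferentiableAt ℝ w x) :
    fderiv ℝ (rhoT a (b + 1) (c + 1) * w) x (0, 1) =
      rhoT a b c x * (x.2 * (1 - x.1 - x.2) * fderiv ℝ w x (0, 1) +
        ((b + 1) * (1 - x.1 - x.2) - (c + 1) * x.2) * w x) := by
  rw [fderiv_mul (differentiableAt_rhoT a (b + 1) (c + 1) hx) hw, add_apply, smul_apply, smul_apply,
    fderiv_rhoT_apply_snd a b c hx, rhoT_add_one_snd hx, rhoT_add_one_third hx]
  simp only [smul_eq_mul]
  ring

lemma integrableOn_fderiv_rhoT_mul_snd (ha : -1 < a) (hb : -1 < b) (hc : -1 < c)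
    (hw : ∀ x ∈ closure Ttri, ContDiffAt ℝ 1 w x) :
    IntegrableOn (fun x => fderiv ℝ (rhoT a (b + 1) (c + 1) * w) x (0, 1)) Ttri := by
  rw [integrableOn_congr_fun (fun x hx => fderiv_rhoT_mul_apply_snd a b c hx
    ((hw x (subset_closure hx)).differentiableAt one_ne_zero)) measurableSet_Ttri]
  refine integrableOn_rhoT_mul ha hb hc ?_
  have hw₀ := continuousOn_of_forall_contDiffAt hw
  have hw₁ := continuousOn_fderiv_apply hw (0, 1)
  fun_prop

theorem hasZeroFlux_rhoT_mul_snd (ha : -1 < a) (hb : -1 < b) (hc : -1 < c)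
    (hw : ∀ x ∈ closure Ttri, ContDiffAt ℝ 1 w x) :
    HasZeroFlux Ttri (rhoT a (b + 1) (c + 1) * w) (0, 1) := by
  refine hasZeroFlux_Ttri_snd (differentiableAt_rhoT_mul _ _ _ hw) ?_ ?_ ?_
    (integrableOn_fderiv_rhoT_mul_snd ha hb hc hw)
  · intro s hs
    have hweight : Continuous fun t => s ^ a * t ^ (b + 1) * (1 - s - t) ^ (c + 1) := by
      fun_prop (disch := linarith)
    refine hweight.continuousOn.mul fun t ht => ?_
    exact ((hw _ (mk_mem_closure_Ttri hs ht)).continuousAt.comp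
      (f := fun t => (s, t)) (by fun_prop)).continuousWithinAt
  · intro s _
    simp [rhoT, Real.zero_rpow (by linarith : b + 1 ≠ 0)]
  · intro s _
    simp [rhoT, Real.zero_rpow (by linarith : c + 1 ≠ 0)]

theorem hasZeroFlux_rhoT_mul_fst (ha : -1 < a) (hb : -1 < b) (hc : -1 < c)
    (hw : ∀ x ∈ closure Ttri, ContDiffAt ℝ 1 w x) :
    HasZeroFlux Ttri (rhoT (a + 1) b (c + 1) * w) (1, 0) := by
  have hcomp : (rhoT (a + 1) b (c + 1) * w) ∘ Prod.swap =
      rhoT b (a + 1) (c + 1) * (w ∘ Prod.swap) := by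
    ext x
    simp [rhoT, sub_right_comm 1 x.2, mul_comm (x.2 ^ (a + 1))]
  have hw_swap := contDiffAt_comp_closure_of_mapsTo
    (contDiff_snd.prodMk contDiff_fst) preimage_swap_Ttri.ge hw
  have hflux := hasZeroFlux_rhoT_mul_snd hb ha hc hw_swap
  exact (hcomp ▸ hflux).of_comp measurableSet_Ttri Measure.measurePreserving_swap
    measurableEmbedding_swap preimage_swap_Ttri
    (fun _ _ => hasFDerivAt_snd.prodMk hasFDerivAt_fst) (by simp)
    (differentiableAt_rhoT_mul _ _ _ hw)

theorem hasZeroFlux_rhoT_mul_fst_sub_snd (ha : -1 < a) (hb : -1 < b) (hc : -1 < c)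
    (hw : ∀ x ∈ closure Ttri, ContDiffAt ℝ 1 w x) :
    HasZeroFlux Ttri (rhoT (a + 1) (b + 1) c * w) (1, -1) := by
  have hcomp : (rhoT (a + 1) (b + 1) c * w) ∘ triangleReflection =
      rhoT (a + 1) c (b + 1) * (w ∘ triangleReflection) := by
    ext x
    simp [rhoT, triangleReflection, mul_right_comm (x.1 ^ (a + 1))]
  have hw_reflect := contDiffAt_comp_closure_of_mapsTo
    contDiff_triangleReflection preimage_triangleReflection_Ttri.ge hw
  have hflux := hasZeroFlux_rhoT_mul_fst ha hc hb hw_reflect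
  exact (hcomp ▸ hflux).of_comp measurableSet_Ttri measurePreserving_triangleReflection
    measurableEmbedding_triangleReflection preimage_triangleReflection_Ttri
    (fun x _ => hasFDerivAt_triangleReflection x) (by simp) (differentiableAt_rhoT_mul _ _ _ hw)

end JacobiWeight

section Polynomials

lemma contDiff_pev (p : Poly2) {n : WithTop ℕ∞} : ContDiff ℝ n (pev p) := by
  refine contDiff_iff_contDiffAt.2 fun x => AnalyticAt.contDiffAt ?_
  refine AnalyticAt.aeval_mvPolynomial (f := fun x : ℝ × ℝ => ![x.1, x.2]) (fun i => ?_) p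
  fin_cases i
  · exact analyticAt_fst
  · exact analyticAt_snd

lemma pev_q11 (x : ℝ × ℝ) : pev q11 x = x.1 * (1 - x.1) := by simp [pev, q11]

lemma pev_q12 (x : ℝ × ℝ) : pev q12 x = -(x.1 * x.2) := by simp [pev, q12]

lemma pev_q22 (x : ℝ × ℝ) : pev q22 x = x.2 * (1 - x.2) := by simp [pev, q22]

end Polynomials

section IntegrationByParts

lemma eqOn_mul_rhoT_phi_fst (a b c : ℝ) (u f g : ℝ × ℝ → ℝ) :
    EqOn (u * fun y => rhoT a b c y * (pev q11 y * f y + pev q12 y * g y))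
      (rhoT (a + 1) b (c + 1) * (u * f) + rhoT (a + 1) (b + 1) c * (u * (f - g))) Ttri := by
  intro x hx
  simp only [Pi.add_apply, Pi.mul_apply, Pi.sub_apply, pev_q11, pev_q12, rhoT_add_one_fst hx,
    rhoT_add_one_snd hx, rhoT_add_one_third hx]
  ring

lemma eqOn_mul_rhoT_phi_snd (a b c : ℝ) (u f g : ℝ × ℝ → ℝ) :
    EqOn (u * fun y => rhoT a b c y * (pev q12 y * f y + pev q22 y * g y))
      (rhoT a (b + 1) (c + 1) * (u * g) - rhoT (a + 1) (b + 1) c * (u * (f - g))) Ttri := by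
  intro x hx
  simp only [Pi.mul_apply, Pi.sub_apply, pev_q12, pev_q22, rhoT_add_one_fst hx,
    rhoT_add_one_snd hx, rhoT_add_one_third hx]
  ring

variable {a b c : ℝ} {u f g : ℝ × ℝ → ℝ}

theorem mul_div_rhoT_phi (hu : ∀ x ∈ Ttri, DifferentiableAt ℝ u x)
    (hf : ∀ x ∈ Ttri, DifferentiableAt ℝ f x) (hg : ∀ x ∈ Ttri, DifferentiableAt ℝ g x) :
    EqOn (fun x => u x *
        (fderiv ℝ (fun y => rhoT a b c y * (pev q11 y * f y + pev q12 y * g y)) x (1, 0) +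
          fderiv ℝ (fun y => rhoT a b c y * (pev q12 y * f y + pev q22 y * g y)) x (0, 1)))
      (fun x => fderiv ℝ (rhoT (a + 1) b (c + 1) * (u * f)) x (1, 0) +
        fderiv ℝ (rhoT a (b + 1) (c + 1) * (u * g)) x (0, 1) +
        fderiv ℝ (rhoT (a + 1) (b + 1) c * (u * (f - g))) x (1, -1) -
        rhoT a b c x * bilPhi q11 q12 q12 q22 x (gradF u x) (f x, g x)) Ttri := by
  intro x hx
  have hpev (p : Poly2) : DifferentiableAt ℝ (pev p) x :=
    (contDiff_pev p).contDiffAt.differentiableAt one_ne_zero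
  have hu := hu x hx
  have hf := hf x hx
  have hg := hg x hx
  have hρ (a b c : ℝ) := differentiableAt_rhoT a b c hx
  have hTx := isOpen_Ttri.mem_nhds hx
  have hfst := (eqOn_mul_rhoT_phi_fst a b c u f g).eventuallyEq_of_mem hTx
  have hsnd := (eqOn_mul_rhoT_phi_snd a b c u f g).eventuallyEq_of_mem hTx
  have hdir : ((1, 0) : ℝ × ℝ) - (0, 1) = (1, -1) := by simp
  beta_reduce
  rw [mul_fderiv_add_fderiv hu (by fun_prop) (by fun_prop), hfst.fderiv_eq, hsnd.fderiv_eq,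
    fderiv_add_apply_add_fderiv_sub_apply (by fun_prop) (by fun_prop) (by fun_prop), hdir]
  simp only [bilPhi, gradF]
  ring

lemma integrableOn_rhoT_mul_bilPhi (ha : -1 < a) (hb : -1 < b) (hc : -1 < c)
    (hu : ∀ x ∈ closure Ttri, ContDiffAt ℝ 1 u x) (hf : ContinuousOn f (closure Ttri))
    (hg : ContinuousOn g (closure Ttri)) (p11 p12 p21 p22 : Poly2) :
    IntegrableOn (fun x => rhoT a b c x * bilPhi p11 p12 p21 p22 x (gradF u x) (f x, g x))
      Ttri := by
  refine integrableOn_rhoT_mul ha hb hc ?_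
  have hpev (p : Poly2) : Continuous (pev p) := (contDiff_pev p (n := 0)).continuous
  have hu₁ := continuousOn_fderiv_apply hu (1, 0)
  have hu₂ := continuousOn_fderiv_apply hu (0, 1)
  simp only [bilPhi, gradF]
  fun_prop

theorem integration_by_parts_triangle_general (ha : -1 < a) (hb : -1 < b) (hc : -1 < c)
    (hu : ∀ x ∈ closure Ttri, ContDiffAt ℝ 1 u x) (hf : ∀ x ∈ closure Ttri, ContDiffAt ℝ 1 f x)
    (hg : ∀ x ∈ closure Ttri, ContDiffAt ℝ 1 g x) :
    ∫ x in Ttri, u x *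
        (fderiv ℝ (fun y => rhoT a b c y * (pev q11 y * f y + pev q12 y * g y)) x (1, 0) +
          fderiv ℝ (fun y => rhoT a b c y * (pev q12 y * f y + pev q22 y * g y)) x (0, 1)) =
      -∫ x in Ttri, rhoT a b c x * bilPhi q11 q12 q12 q22 x (gradF u x) (f x, g x) := by
  have hdiff {w : ℝ × ℝ → ℝ} (hw : ∀ x ∈ closure Ttri, ContDiffAt ℝ 1 w x) :
      ∀ x ∈ Ttri, DifferentiableAt ℝ w x := fun x hx =>
    (hw x (subset_closure hx)).differentiableAt one_ne_zero
  obtain ⟨hint₁, hzero₁⟩ := hasZeroFlux_rhoT_mul_fst (w := u * f) ha hb hc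
    fun x hx => (hu x hx).mul (hf x hx)
  obtain ⟨hint₂, hzero₂⟩ := hasZeroFlux_rhoT_mul_snd (w := u * g) ha hb hc
    fun x hx => (hu x hx).mul (hg x hx)
  obtain ⟨hint₃, hzero₃⟩ := hasZeroFlux_rhoT_mul_fst_sub_snd (w := u * (f - g)) ha hb hc
    fun x hx => (hu x hx).mul ((hf x hx).sub (hg x hx))
  have hint₄ := integrableOn_rhoT_mul_bilPhi ha hb hc hu (continuousOn_of_forall_contDiffAt hf)
    (continuousOn_of_forall_contDiffAt hg) q11 q12 q12 q22
  have hint₁₂ := Integrable.fun_add hint₁ hint₂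
  rw [setIntegral_congr_fun measurableSet_Ttri (mul_div_rhoT_phi (hdiff hu) (hdiff hf) (hdiff hg)),
    integral_sub (hint₁₂.fun_add hint₃) hint₄, integral_add hint₁₂ hint₃,
    integral_add hint₁ hint₂, hzero₁, hzero₂, hzero₃]
  simp

end IntegrationByParts

/-- Integration by parts on the triangle: if `u` is `C¹` on a neighborhood
of the closed triangle, `u ∈ L²(T,ρ)` and `∇u ∈ L²(T,ρΦ)`, then
`∫_T u div(ρΦv) = −∫_T (∇u)ᵗ ρΦ v` for every polynomial pair `v`. -/
theorem integration_by_parts_triangle (α β γ : ℝ) (hα : -1 < α) (hβ : -1 < β) (hγ : -1 < γ)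
    (u : ℝ × ℝ → ℝ)
    (hu : ∃ U : Set (ℝ × ℝ), IsOpen U ∧ closure Ttri ⊆ U ∧ ContDiffOn ℝ 1 u U)
    (huL2 : IntegrableOn (fun x => u x ^ 2 * rhoT α β γ x) Ttri)
    (hgrad : IntegrableOn
      (fun x => rhoT α β γ x * bilPhi q11 q12 q12 q22 x (gradF u x) (gradF u x)) Ttri)
    (v1 v2 : Poly2) :
    ∫ x in Ttri, u x * divRhoPhi (rhoT α β γ) q11 q12 q12 q22 v1 v2 x =
      - ∫ x in Ttri,
          rhoT α β γ x * bilPhi q11 q12 q12 q22 x (gradF u x) (pev v1 x, pev v2 x) := by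
  obtain ⟨U, hU, hTU, hu⟩ := hu
  exact integration_by_parts_triangle_general hα hβ hγ
    (fun x hx => hu.contDiffAt (hU.mem_nhds (hTU hx)))
    (fun _ _ => (contDiff_pev v1).contDiffAt) (fun _ _ => (contDiff_pev v2).contDiffAt)
end
end
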